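/- arXiv:1902.03648 — 3 statements merged into one kernel-verified Lean document; each statement's English description precedes it below -/
import Mathlib

section
/- Let H be any finite simple graph on m vertices and let F = P_3 ⊔ K_1 ⊔ H (so F has m+4 vertices). Then there exists a first-order sentence in the language of graphs of quantifier depth at most m+3 = v(F)−1 which expresses the property C[F]; in particular D[F] ≤ v(F)−1. -/
open FirstOrder

/-- Quantifier depth of a first-order (bounded) formula: atomic formulas have
depth 0, binary connectives take the max, and a quantifier adds 1. -/
def FirstOrder.Language.BoundedFormula.qdepth {L : Language} {α : Type*} :
    {n : ℕ} → L.BoundedFormula α n → ℕ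
  | _, .falsum => 0
  | _, .equal _ _ => 0
  | _, .rel _ _ => 0
  | _, .imp f g => max f.qdepth g.qdepth
  | _, .all f => f.qdepth + 1

/-- A sentence of the language of graphs expresses the property `C[F]` of containing an
induced subgraph isomorphic to `F` if it holds in a finite graph `G` iff
there is an induced-subgraph embedding (`↪g`) of `F` into `G`. -/
def Expresses {α : Type} (φ : FirstOrder.Language.graph.Sentence) (F : SimpleGraph α) : Prop :=
  ∀ (V : Type) (_ : Fintype V) (G : SimpleGraph V),
    (letI := G.structure; φ.Realize V) ↔ Nonempty (F ↪g G)

namespace Shallow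

/-- A graph property of `k`-tuples defined by a formula of quantifier depth at most `d`. -/
def Dfn (k d : ℕ) (P : ∀ V : Type, SimpleGraph V → (Fin k → V) → Prop) : Prop :=
  ∃ φ : Language.graph.BoundedFormula Empty k, φ.qdepth ≤ d ∧
    ∀ (V : Type) (G : SimpleGraph V) (v : Fin k → V),
      (letI := G.structure; φ.Realize (default : Empty → V) v) ↔ P V G v

variable {k d : ℕ} {P Q : ∀ V : Type, SimpleGraph V → (Fin k → V) → Prop}

theorem Dfn.congr (h : Dfn k d P) (hPQ : ∀ V G v, P V G v ↔ Q V G v) : Dfn k d Q := by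
  obtain ⟨φ, h1, h2⟩ := h
  exact ⟨φ, h1, fun V G v => (h2 V G v).trans (hPQ V G v)⟩

theorem Dfn.not (h : Dfn k d P) : Dfn k d (fun V G v => ¬ P V G v) := by
  obtain ⟨φ, h1, h2⟩ := h
  refine ⟨φ.imp .falsum, ?_, fun V G v => ?_⟩
  · simpa [Language.BoundedFormula.qdepth] using h1
  · exact not_congr (h2 V G v)

theorem Dfn.imp (h : Dfn k d P) (h' : Dfn k d Q) :
    Dfn k d (fun V G v => P V G v → Q V G v) := by
  obtain ⟨φ, h1, h2⟩ := h
  obtain ⟨ψ, h3, h4⟩ := h'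
  refine ⟨φ.imp ψ, ?_, fun V G v => ?_⟩
  · simpa [Language.BoundedFormula.qdepth] using ⟨h1, h3⟩
  · exact imp_congr (h2 V G v) (h4 V G v)

theorem Dfn.and (h : Dfn k d P) (h' : Dfn k d Q) :
    Dfn k d (fun V G v => P V G v ∧ Q V G v) :=
  (h.imp h'.not).not.congr fun V G v => by tauto

theorem Dfn.ex {R : ∀ V : Type, SimpleGraph V → (Fin k → V) → V → Prop}
    (h : Dfn (k + 1) d (fun V G w => R V G (Fin.init w) (w (Fin.last k)))) :
    Dfn k (d + 1) (fun V G v => ∃ x, R V G v x) := by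
  have h := h.not
  obtain ⟨φ, h1, h2⟩ := h
  have : Dfn k (d + 1) (fun V G v => ∀ x, ¬ R V G v x) := by
    refine ⟨φ.all, ?_, fun V G v => ?_⟩
    · simpa [Language.BoundedFormula.qdepth] using h1
    · refine forall_congr' fun x => ?_
      refine (h2 V G _).trans ?_
      simp
  exact this.not.congr fun V G v => by simp

theorem Dfn.mono {d' : ℕ} (h : Dfn k d P) (hd : d ≤ d') : Dfn k d' P := by
  obtain ⟨φ, h1, h2⟩ := h
  exact ⟨φ, h1.trans hd, h2⟩

theorem Dfn.true : Dfn k d (fun _ _ _ => True) :=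
  ⟨.imp .falsum .falsum, by simp [Language.BoundedFormula.qdepth], fun V G v => by
    simp [Language.BoundedFormula.Realize]⟩

theorem Dfn.all_fin {n : ℕ} {R : Fin n → ∀ V : Type, SimpleGraph V → (Fin k → V) → Prop}
    (h : ∀ i, Dfn k d (R i)) : Dfn k d (fun V G v => ∀ i, R i V G v) := by
  induction n with
  | zero => exact Dfn.true.congr fun V G v => by simp
  | succ n ih =>
    exact ((h 0).and (ih fun i => h i.succ)).congr fun V G v => by rw [Fin.forall_fin_succ]

theorem Dfn.adj (i j : Fin k) : Dfn k d (fun _ G v => G.Adj (v i) (v j)) := by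
  refine ⟨Language.adj.boundedFormula₂ (.var (.inr i)) (.var (.inr j)), ?_, fun V G v => ?_⟩
  · simp [Language.Relations.boundedFormula₂, Language.Relations.boundedFormula,
      Language.BoundedFormula.qdepth]
  · let := G.structure
    simp only [Language.BoundedFormula.realize_rel₂]
    rfl

theorem Dfn.eq (i j : Fin k) : Dfn k d (fun _ _ v => v i = v j) := by
  refine ⟨.equal (.var (.inr i)) (.var (.inr j)), ?_, fun V G v => ?_⟩
  · simp [Language.BoundedFormula.qdepth]
  · rfl

theorem Dfn.const (p : Prop) : Dfn k d (fun _ _ _ => p) := by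
  by_cases hp : p
  · exact Dfn.true.congr fun V G v => by simp [hp]
  · exact Dfn.true.not.congr fun V G v => by simp [hp]

theorem Dfn.ex_tuple {k d : ℕ} {P : ∀ V : Type, SimpleGraph V → (Fin k → V) → Prop}
    (h : Dfn k d P) :
    Dfn 0 (k + d) (fun V G _ => ∃ v, P V G v) := by
  induction k generalizing d with
  | zero =>
    exact (h.mono (by omega)).congr fun V G v => by
      constructor
      · exact fun h => ⟨_, h⟩
      · rintro ⟨w, hw⟩; rwa [Subsingleton.elim v w]
  | succ k ih =>
    have h' : Dfn k (d + 1) (fun V G v => ∃ x, P V G (Fin.snoc v x)) := by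
      apply Dfn.ex
      exact h.congr fun V G v => by rw [Fin.snoc_init_self]
    exact ((ih h').mono (by omega)).congr fun V G v => by
      constructor
      · rintro ⟨w, x, hw⟩; exact ⟨_, hw⟩
      · rintro ⟨w, hw⟩; exact ⟨Fin.init w, w (Fin.last k), by rwa [Fin.snoc_init_self]⟩

/-- `x` avoids the tuple and its neighbourhood. -/
def Away {m : ℕ} {V : Type} (G : SimpleGraph V) (v : Fin m → V) (x : V) : Prop :=
  ∀ i, ¬ v i = x ∧ ¬ G.Adj (v i) x

/-- The depth three property, relativized to `Away`. -/
def Core {m : ℕ} {V : Type} (G : SimpleGraph V) (v : Fin m → V) : Prop :=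
  ∃ x, Away G v x ∧
    (∃ y, Away G v y ∧ (¬ x = y ∧ ¬ G.Adj x y) ∧
      ∃ z, Away G v z ∧ (¬ x = z ∧ ¬ G.Adj x z) ∧ (¬ y = z ∧ ¬ G.Adj y z)) ∧
    (∃ y, Away G v y ∧ G.Adj x y ∧
      (∃ z, Away G v z ∧ (¬ x = z ∧ ¬ G.Adj x z) ∧ G.Adj y z) ∧
      (∃ z, Away G v z ∧ (¬ x = z ∧ ¬ G.Adj x z) ∧ (¬ y = z ∧ ¬ G.Adj y z)))

theorem expr_core (m : ℕ) : Dfn m 3 (fun _ G v => Core G v) := by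
  unfold Core Away
  refine Dfn.ex (d := 2) ?_
  dsimp only [Fin.init]
  have nn : ∀ {k d : ℕ} (i j : Fin k), Dfn k d (fun _ G v => ¬ v i = v j ∧ ¬ G.Adj (v i) (v j)) :=
    fun i j => (Dfn.eq i j).not.and (Dfn.adj i j).not
  refine .and (.all_fin fun i => nn _ _) (.and (.ex (d := 1) ?_) (.ex (d := 1) ?_))
  · dsimp only [Fin.init]
    refine .and (.all_fin fun i => nn _ _) (.and (nn _ _) (.ex (d := 0) ?_))
    dsimp only [Fin.init]
    exact .and (.all_fin fun i => nn _ _) (.and (nn _ _) (nn _ _))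
  · dsimp only [Fin.init]
    refine .and (.all_fin fun i => nn _ _) (.and (.adj _ _) (.and (.ex (d := 0) ?_) (.ex (d := 0) ?_)))
    · dsimp only [Fin.init]
      exact .and (.all_fin fun i => nn _ _) (.and (nn _ _) (.adj _ _))
    · dsimp only [Fin.init]
      exact .and (.all_fin fun i => nn _ _) (.and (nn _ _) (nn _ _))

/-- An induced copy of `P₃ ⊔ K₁` with path `b d c` and isolated vertex `a`, away from `v`. -/
def Copaw {m : ℕ} {V : Type} (G : SimpleGraph V) (v : Fin m → V) : Prop :=
  ∃ a b c d, Away G v a ∧ Away G v b ∧ Away G v c ∧ Away G v d ∧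
    G.Adj b d ∧ G.Adj d c ∧ ¬ b = c ∧ ¬ G.Adj b c ∧
    ¬ a = b ∧ ¬ a = c ∧ ¬ a = d ∧ ¬ G.Adj a b ∧ ¬ G.Adj a c ∧ ¬ G.Adj a d

theorem core_of_copaw {m : ℕ} {V : Type} (G : SimpleGraph V) (v : Fin m → V)
    (h : Copaw G v) : Core G v := by
  obtain ⟨a, b, c, d, ha, hb, hc, hd, h1, h2, h3, h4, h5, h6, h7, h8, h9, h10⟩ := h
  refine ⟨b, hb, ⟨a, ha, ⟨Ne.symm h5, fun h => h8 h.symm⟩, c, hc, ⟨h3, h4⟩, h6, h9⟩, d, hd, h1,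
    ⟨c, hc, ⟨h3, h4⟩, h2⟩, a, ha, ⟨Ne.symm h5, fun h => h8 h.symm⟩, Ne.symm h7, fun h => h10 h.symm⟩

theorem copaw_of_core {m : ℕ} {V : Type} (G : SimpleGraph V) (v : Fin m → V)
    (h : Core G v) : Copaw G v := by
  obtain ⟨x, hx, ⟨p, hp, ⟨xp, xp'⟩, q, hq, ⟨xq, xq'⟩, pq, pq'⟩, y, hy, xy, ⟨z, hz, ⟨xz, xz'⟩, yz⟩,
    w, hw, ⟨xw, xw'⟩, yw, yw'⟩ := h
  by_contra hn
  have key : ∀ a b c d, Away G v a → Away G v b → Away G v c → Away G v d →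
      ¬ a = b → ¬ a = c → ¬ b = c → ¬ a = d → ¬ G.Adj a b → ¬ G.Adj a c → ¬ G.Adj b c →
      ¬ G.Adj a d → G.Adj b d → G.Adj c d → False := by
    intro a b c d ha hb hc hd h1 h2 h3 h4 h5 h6 h7 h8 h9 h10
    exact hn ⟨a, b, c, d, ha, hb, hc, hd, h9, h10.symm, h3, h7, h1, h2, h4, h5, h6, h8⟩
  have symm : ∀ a b, G.Adj a b → G.Adj b a := fun a b h => h.symm
  have irr : ∀ a, ¬ G.Adj a a := fun a => G.irrefl
  have yx := xy.symm
  have zy := yz.symm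
  have wy' : ¬ G.Adj w y := fun h => yw' h.symm
  have zx' : ¬ G.Adj z x := fun h => xz' h.symm
  have wx' : ¬ G.Adj w x := fun h => xw' h.symm
  have zw : ¬ z = w := by rintro rfl; exact yw' yz
  have hzw : G.Adj z w := by
    by_contra hzw
    exact key w x z y hw hx hz hy (Ne.symm xw) (Ne.symm zw) xz (Ne.symm yw) wx'
      (fun h => hzw h.symm) xz' wy' xy zy
  have step : ∃ p, Away G v p ∧ ¬ x = p ∧ ¬ G.Adj x p ∧ ¬ z = p ∧ ¬ G.Adj z p := by
    by_cases h1 : z = p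
    · subst h1; exact ⟨q, hq, xq, xq', pq, pq'⟩
    by_cases h2 : z = q
    · subst h2; exact ⟨p, hp, xp, xp', h1, fun h => pq' h.symm⟩
    by_cases h3 : G.Adj z p
    · by_cases h4 : G.Adj z q
      · exact (key x p q z hx hp hq hz xp xq pq xz xp' xq' pq' xz' h3.symm h4.symm).elim
      · exact ⟨q, hq, xq, xq', h2, h4⟩
    · exact ⟨p, hp, xp, xp', h1, h3⟩
  obtain ⟨r, hr, xr, xr', zr, zr'⟩ := step
  have wr : ¬ w = r := by rintro rfl; exact zr' hzw
  have wr' : ¬ G.Adj w r := fun h =>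
    key x z r w hx hz hr hw xz xr zr xw xz' xr' zr' xw' hzw h.symm
  have yr : ¬ y = r := by rintro rfl; exact xr' xy
  have yr' : ¬ G.Adj y r := fun h =>
    key w x r y hw hx hr hy (Ne.symm xw) wr xr (Ne.symm yw) wx' wr' xr' wy' xy h.symm
  exact key r x z y hr hx hz hy (Ne.symm xr) (Ne.symm zr) xz (Ne.symm yr)
    (fun h => xr' h.symm) (fun h => zr' h.symm) xz' (fun h => yr' h.symm) xy zy

/-- The tuple `v` induces `H`, with a copy of `P₃ ⊔ K₁` away from it. -/
def Full {m : ℕ} (H : SimpleGraph (Fin m)) {V : Type} (G : SimpleGraph V) (v : Fin m → V) : Prop :=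
  (∀ i j, (v i = v j → i = j) ∧ (G.Adj (v i) (v j) → H.Adj i j) ∧ (H.Adj i j → G.Adj (v i) (v j))) ∧
    Core G v

theorem expr_full {m : ℕ} (H : SimpleGraph (Fin m)) : Dfn m 3 (fun _ G v => Full H G v) :=
  .and (.all_fin fun i => .all_fin fun j => .and (.imp (.eq i j) (.const _))
    (.and (.imp (.adj i j) (.const _)) (.imp (.const _) (.adj i j)))) (expr_core m)

theorem full_iff {m : ℕ} (H : SimpleGraph (Fin m)) {V : Type} (G : SimpleGraph V) :
    (∃ v, Full H G v) ↔
      Nonempty (((SimpleGraph.pathGraph 3 ⊕g (⊥ : SimpleGraph (Fin 1))) ⊕g H) ↪g G) := by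
  constructor
  · rintro ⟨v, hv, hc⟩
    obtain ⟨a, b, c, d, ha, hb, hc, hd, h1, h2, h3, h4, h5, h6, h7, h8, h9, h10⟩ :=
      copaw_of_core G v hc
    have hbd := h1.ne
    have hdc := h2.ne
    let s : (Fin 3 ⊕ Fin 1) → V := Sum.elim ![b, d, c] ![a]
    have hs : ∀ t, Away G v (s t) := by
      rintro (t | t) <;> fin_cases t <;> assumption
    have hinj : Function.Injective s := by
      rintro (t | t) (u | u) <;> fin_cases t <;> fin_cases u <;> simp [s] <;> grind
    have hadj : ∀ t u, G.Adj (s t) (s u) ↔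
        (SimpleGraph.pathGraph 3 ⊕g (⊥ : SimpleGraph (Fin 1))).Adj t u := by
      rintro (t | t) (u | u) <;> fin_cases t <;> fin_cases u <;>
        simp [s, SimpleGraph.pathGraph_adj] <;> grind [SimpleGraph.adj_comm]
    refine ⟨⟨⟨Sum.elim s v, ?_⟩, ?_⟩⟩
    · rintro (t | t) (u | u) h
      · rw [hinj h]
      · exact ((hs t u).1 h.symm).elim
      · exact ((hs u t).1 h).elim
      · rw [(hv t u).1 h]
    · rintro (t | t) (u | u)
      · exact hadj t u
      · exact iff_of_false (fun h : G.Adj (s t) (v u) => (hs t u).2 h.symm) (by simp)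
      · exact iff_of_false (hs u t).2 (by simp)
      · exact ⟨(hv t u).2.1, (hv t u).2.2⟩
  · rintro ⟨f⟩
    have hi := f.injective
    have ha : ∀ x y, G.Adj (f x) (f y) ↔ _ := fun x y => f.map_adj_iff
    refine ⟨fun i => f (.inr i), fun i j => ⟨fun h => ?_, ?_, ?_⟩, core_of_copaw G _
      ⟨f (.inl (.inr 0)), f (.inl (.inl 0)), f (.inl (.inl 2)), f (.inl (.inl 1)), ?_⟩⟩
    · simpa using hi h
    · simp [ha]
    · simp [ha]
    · simp [Away, ha, hi.eq_iff, SimpleGraph.pathGraph_adj]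

end Shallow

/-- For any finite graph `H` on `m` vertices and `F = P₃ ⊔ K₁ ⊔ H`,
there is a first-order sentence of quantifier depth at most `m + 3 = v(F) - 1`
expressing the property of containing an induced subgraph isomorphic to `F`. -/
theorem exists_shallow_sentence_expressing (m : ℕ) (H : SimpleGraph (Fin m)) :
    ∃ φ : Language.graph.Sentence, φ.qdepth ≤ m + 3 ∧
      Expresses φ ((SimpleGraph.pathGraph 3 ⊕g (⊥ : SimpleGraph (Fin 1))) ⊕g H) := by
  obtain ⟨φ, h1, h2⟩ := (Shallow.expr_full H).ex_tuple
  refine ⟨φ, h1, fun V _ G => ?_⟩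
  exact (h2 V G default).trans (Shallow.full_iff H G)
end

section
/- Let m be a positive integer and F = P_3 ⊔ mK_1 (so F has m+3 vertices). Then D[F] = m+2 = v(F)−1; that is, there is a first-order sentence of quantifier depth m+2 expressing C[F], and no first-order sentence of quantifier depth at most m+1 expresses C[F]. -/
open FirstOrder

namespace PathUnion

open FirstOrder.Language

/-- `v` is distinct from and nonadjacent to all `xs i`. -/
def Away {V ι : Type} (G : SimpleGraph V) (xs : ι → V) (v : V) : Prop :=
  ∀ i, v ≠ xs i ∧ ¬ G.Adj v (xs i)

/-- `P` is definable by a formula of quantifier depth at most `d`. -/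
def DefN (n d : ℕ) (P : ∀ (V : Type), SimpleGraph V → (Fin n → V) → Prop) : Prop :=
  ∃ φ : Language.graph.BoundedFormula Empty n, φ.qdepth ≤ d ∧
    ∀ (V : Type) (G : SimpleGraph V) (xs : Fin n → V),
      (letI := G.structure; φ.Realize default xs) ↔ P V G xs

variable {n d : ℕ} {P Q : ∀ (V : Type), SimpleGraph V → (Fin n → V) → Prop}

theorem DefN.congr (h : DefN n d P) (hPQ : ∀ V G xs, P V G xs ↔ Q V G xs) : DefN n d Q := by
  obtain ⟨φ, h1, h2⟩ := h
  exact ⟨φ, h1, fun V G xs => (h2 V G xs).trans (hPQ V G xs)⟩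

theorem DefN.mono {d' : ℕ} (h : DefN n d P) (hd : d ≤ d') : DefN n d' P := by
  obtain ⟨φ, h1, h2⟩ := h
  exact ⟨φ, h1.trans hd, h2⟩

theorem DefN.not (h : DefN n d P) : DefN n d (fun V G xs => ¬ P V G xs) := by
  obtain ⟨φ, h1, h2⟩ := h
  refine ⟨φ.imp .falsum, ?_, ?_⟩
  · simpa [BoundedFormula.qdepth] using h1
  · intro V G xs
    exact not_congr (h2 V G xs)

theorem DefN.imp (h : DefN n d P) (h' : DefN n d Q) :
    DefN n d (fun V G xs => P V G xs → Q V G xs) := by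
  obtain ⟨φ, h1, h2⟩ := h
  obtain ⟨ψ, h3, h4⟩ := h'
  refine ⟨φ.imp ψ, ?_, ?_⟩
  · simpa [BoundedFormula.qdepth] using ⟨h1, h3⟩
  · intro V G xs
    exact imp_congr (h2 V G xs) (h4 V G xs)

theorem DefN.and (h : DefN n d P) (h' : DefN n d Q) :
    DefN n d (fun V G xs => P V G xs ∧ Q V G xs) :=
  ((h.imp h'.not).not).congr (by intros; tauto)

theorem DefN.ex {P : ∀ (V : Type), SimpleGraph V → (Fin (n + 1) → V) → Prop}
    (h : DefN (n + 1) d P) :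
    DefN n (d + 1) (fun V G xs => ∃ x, P V G (Fin.snoc xs x)) := by
  obtain ⟨φ, h1, h2⟩ := h.not
  have : DefN n (d + 1) (fun V G xs => ∀ x, ¬ P V G (Fin.snoc xs x)) := by
    refine ⟨φ.all, ?_, ?_⟩
    · simpa [BoundedFormula.qdepth] using h1
    · intro V G xs
      exact forall_congr' fun x => h2 V G _
  exact this.not.congr (by intros; simp)

theorem defEq (i j : Fin n) : DefN n d (fun _ _ xs => xs i = xs j) := by
  refine ⟨.equal (.var (.inr i)) (.var (.inr j)), by simp [BoundedFormula.qdepth], ?_⟩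
  intro V G xs
  exact Iff.rfl

theorem defAdj (i j : Fin n) : DefN n d (fun _ G xs => G.Adj (xs i) (xs j)) := by
  refine ⟨.rel adj ![.var (.inr i), .var (.inr j)], by simp [BoundedFormula.qdepth], ?_⟩
  intro V G xs
  exact Iff.rfl

theorem defForall {k : ℕ} {R : Fin k → ∀ (V : Type), SimpleGraph V → (Fin n → V) → Prop}
    (h : ∀ i, DefN n d (R i)) : DefN n d (fun V G xs => ∀ i, R i V G xs) := by
  induction k with
  | zero =>
    exact ⟨BoundedFormula.imp .falsum .falsum, by simp [BoundedFormula.qdepth], fun V G xs =>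
      ⟨fun _ i => i.elim0, fun _ h => h⟩⟩
  | succ k ih =>
    exact ((h 0).and (ih fun i => h i.succ)).congr (by intros; rw [Fin.forall_fin_succ])

theorem defAway {k : ℕ} (e : Fin k → Fin n) (j : Fin n) :
    DefN n d (fun _ G xs => Away G (fun i => xs (e i)) (xs j)) :=
  defForall fun i => (defEq j (e i)).not.and (defAdj j (e i)).not

/-- Core property: equivalent to an induced `P₃ ⊔ K₁` in the part of the graph away from `xs`. -/
def Core {V : Type} (G : SimpleGraph V) (xs : Fin n → V) : Prop :=
  ∃ x, Away G xs x ∧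
    (∃ p, (Away G xs p ∧ ¬ p = x ∧ ¬ G.Adj x p) ∧
      ∃ q, Away G xs q ∧ ¬ q = x ∧ ¬ q = p ∧ ¬ G.Adj x q ∧ ¬ G.Adj p q) ∧
    (∃ y, (Away G xs y ∧ G.Adj x y) ∧
      (∃ z, Away G xs z ∧ ¬ z = x ∧ ¬ z = y ∧ ¬ G.Adj x z ∧ ¬ G.Adj y z) ∧
      (∃ w, Away G xs w ∧ ¬ w = x ∧ ¬ w = y ∧
        ¬ ((G.Adj x w → G.Adj y w) ∧ (G.Adj y w → G.Adj x w))))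

theorem defCore : DefN n 3 (fun _ G xs => Core G xs) := by
  let x : Fin (n + 3) := (Fin.last n).castSucc.castSucc
  let y : Fin (n + 3) := (Fin.last (n + 1)).castSucc
  let z : Fin (n + 3) := Fin.last (n + 2)
  let e : Fin n → Fin (n + 3) := fun i => i.castSucc.castSucc.castSucc
  let x' : Fin (n + 2) := (Fin.last n).castSucc
  let y' : Fin (n + 2) := Fin.last (n + 1)
  let e' : Fin n → Fin (n + 2) := fun i => i.castSucc.castSucc
  have h := DefN.ex (d := 2) <|
    (defAway (n := n + 1) (fun i : Fin n => i.castSucc) (Fin.last n)).and <|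
    (DefN.ex (d := 1) (n := n + 1)
      (((defAway e' y').and ((defEq y' x').not.and (defAdj x' y').not)).and <|
        DefN.ex (d := 0) ((defAway e z).and ((defEq z x).not.and ((defEq z y).not.and
          ((defAdj x z).not.and (defAdj y z).not)))))).and <|
    (DefN.ex (d := 1) (n := n + 1)
      (((defAway e' y').and (defAdj x' y')).and <|
        (DefN.ex (d := 0) ((defAway e z).and ((defEq z x).not.and ((defEq z y).not.and
          ((defAdj x z).not.and (defAdj y z).not))))).and <|
        (DefN.ex (d := 0) ((defAway e z).and ((defEq z x).not.and ((defEq z y).not.and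
          (((defAdj x z).imp (defAdj y z)).and ((defAdj y z).imp (defAdj x z))).not))))))
  refine h.congr ?_
  intro V G xs
  simp only [x, y, z, e, x', y', e', Fin.snoc_castSucc, Fin.snoc_last, Core]

/-- Induced copy of `P₃ ⊔ k K₁` away from `xs`. -/
def Good {V : Type} (k : ℕ) (G : SimpleGraph V) (xs : Fin n → V) : Prop :=
  ∃ (a b c : V) (w : Fin k → V), G.Adj a b ∧ G.Adj b c ∧ a ≠ c ∧ ¬ G.Adj a c ∧
    Function.Injective w ∧ (∀ i j, ¬ G.Adj (w i) (w j)) ∧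
    Away G w a ∧ Away G w b ∧ Away G w c ∧
    Away G xs a ∧ Away G xs b ∧ Away G xs c ∧ ∀ i, Away G xs (w i)

theorem good_one {V : Type} (G : SimpleGraph V) (xs : Fin n → V) :
    Good 1 G xs ↔ ∃ a b c w, G.Adj a b ∧ G.Adj b c ∧ a ≠ c ∧ ¬ G.Adj a c ∧
      (a ≠ w ∧ ¬ G.Adj a w) ∧ (b ≠ w ∧ ¬ G.Adj b w) ∧ (c ≠ w ∧ ¬ G.Adj c w) ∧
      Away G xs a ∧ Away G xs b ∧ Away G xs c ∧ Away G xs w := by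
  constructor
  · rintro ⟨a, b, c, w, h1, h2, h3, h4, -, -, h5, h6, h7, h8, h9, h10, h11⟩
    exact ⟨a, b, c, w 0, h1, h2, h3, h4, h5 0, h6 0, h7 0, h8, h9, h10, h11 0⟩
  · rintro ⟨a, b, c, w, h1, h2, h3, h4, h5, h6, h7, h8, h9, h10, h11⟩
    exact ⟨a, b, c, fun _ => w, h1, h2, h3, h4, Function.injective_of_subsingleton _, by simp,
      fun _ => h5, fun _ => h6, fun _ => h7, h8, h9, h10, fun _ => h11⟩

theorem core_iff {V : Type} (G : SimpleGraph V) (xs : Fin n → V) :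
    Core G xs ↔ Good 1 G xs := by
  rw [good_one]
  constructor
  · rintro ⟨x, hx, ⟨p, ⟨hp, hpx, axp⟩, q, hq, hqx, hqp, axq, apq⟩, y, ⟨hy, axy⟩,
      ⟨z, hz, hzx, hzy, axz, ayz⟩, w, hw, hwx, hwy, haw⟩
    by_contra hcon
    -- a vertex nonadjacent to one vertex of an independent triple is nonadjacent to another
    have key : ∀ a b c t, Away G xs a → Away G xs b → Away G xs c → Away G xs t →
        a ≠ b → a ≠ c → b ≠ c → ¬ G.Adj a b → ¬ G.Adj a c → ¬ G.Adj b c →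
        t ≠ a → ¬ G.Adj t a → G.Adj t b → G.Adj t c → False := by
      intro a b c t ha hb hc ht hab hac hbc nab nac nbc hta nta tb tc
      exact hcon ⟨b, t, c, a, tb.symm, tc, hbc, nbc, ⟨hab.symm, fun h => nab h.symm⟩,
        ⟨hta, nta⟩, ⟨hac.symm, fun h => nac h.symm⟩, hb, ht, hc, ha⟩
    have main : ∀ p, Away G xs p → p ≠ x → p ≠ z → ¬ G.Adj x p → ¬ G.Adj z p → False := by
      intro p hp hpx hpz axp azp
      have hyp : p ≠ y := by rintro rfl; exact axp axy
      have ayp : ¬ G.Adj y p := fun h =>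
        key z x p y hz hx hp hy hzx (Ne.symm hpz) (Ne.symm hpx) (fun h => axz h.symm) azp axp
          (Ne.symm hzy) ayz axy.symm h
      -- z and p are symmetric now
      have step : ∀ z, Away G xs z → z ≠ x → z ≠ y → ¬ G.Adj x z → ¬ G.Adj y z →
          w ≠ z → ¬ G.Adj w z → False := by
        intro z hz hzx hzy axz ayz hwz awz
        by_cases h1 : G.Adj x w
        · have h2 : ¬ G.Adj y w := by tauto
          exact key z w y x hz hw hy hx hwz.symm hzy hwy (fun h => awz h.symm)
            (fun h => ayz h.symm) (fun h => h2 h.symm) hzx.symm axz h1 axy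
        · have h2 : G.Adj y w := by tauto
          exact key z w x y hz hw hx hy hwz.symm hzx hwx (fun h => awz h.symm)
            (fun h => axz h.symm) (fun h => h1 h.symm) hzy.symm ayz h2 axy.symm
      have hwz : w ≠ z := by rintro rfl; exact haw ⟨fun h => (axz h).elim, fun h => (ayz h).elim⟩
      have hwp : w ≠ p := by rintro rfl; exact haw ⟨fun h => (axp h).elim, fun h => (ayp h).elim⟩
      by_cases h1 : G.Adj w z
      · by_cases h2 : G.Adj w p
        · by_cases h3 : G.Adj x w
          · have h4 : ¬ G.Adj y w := by tauto
            exact key y z p w hy hz hp hw (Ne.symm hzy) (Ne.symm hyp) (Ne.symm hpz) ayz ayp azp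
              hwy (fun h => h4 h.symm) h1 h2
          · exact key x z p w hx hz hp hw (Ne.symm hzx) (Ne.symm hpx) (Ne.symm hpz) axz axp azp
              hwx (fun h => h3 h.symm) h1 h2
        · exact step p hp hpx hyp axp ayp hwp h2
      · exact step z hz hzx hzy axz ayz hwz h1
    by_cases hzp : z = p
    · subst hzp
      exact main q hq hqx hqp axq apq
    by_cases hzq : z = q
    · subst hzq
      exact main p hp hpx (Ne.symm hzp) axp (fun h => apq h.symm)
    by_cases h1 : G.Adj z p
    · by_cases h2 : G.Adj z q
      · exact key x p q z hx hp hq hz (Ne.symm hpx) (Ne.symm hqx) (Ne.symm hqp) axp axq apq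
          hzx (fun h => axz h.symm) h1 h2
      · exact main q hq hqx (Ne.symm hzq) axq h2
    · exact main p hp hpx (Ne.symm hzp) axp h1
  · rintro ⟨a, b, c, w, ab, bc, hac, ac, ⟨haw, aw⟩, ⟨hbw, bw⟩, ⟨hcw, cw⟩, ha, hb, hc, hw⟩
    refine ⟨a, ha, ⟨c, ⟨hc, hac.symm, ac⟩, w, hw, haw.symm, hcw.symm, aw, cw⟩, b, ⟨hb, ab⟩,
      ⟨w, hw, haw.symm, hbw.symm, aw, bw⟩, c, hc, hac.symm, bc.ne', ?_⟩
    tauto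

theorem good_succ {V : Type} (k : ℕ) (G : SimpleGraph V) (xs : Fin n → V) :
    (∃ v, Away G xs v ∧ Good k G (Fin.snoc xs v : Fin (n + 1) → V)) ↔ Good (k + 1) G xs := by
  have hs : ∀ v u, Away G (Fin.snoc xs v : Fin (n + 1) → V) u ↔
      Away G xs u ∧ u ≠ v ∧ ¬ G.Adj u v := by
    intro v u
    simp [Away, Fin.forall_fin_succ']
  have hc : ∀ v (w : Fin k → V) u, Away G (Fin.cons v w : Fin (k + 1) → V) u ↔
      Away G w u ∧ u ≠ v ∧ ¬ G.Adj u v := by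
    intro v w u
    simp [Away, Fin.forall_fin_succ]
    tauto
  constructor
  · rintro ⟨v, hv, a, b, c, w, h1, h2, h3, h4, h5, h6, h7, h8, h9, h10, h11, h12, h13⟩
    simp only [hs] at h10 h11 h12 h13
    refine ⟨a, b, c, Fin.cons v w, h1, h2, h3, h4, ?_, ?_, ?_, ?_, ?_, h10.1, h11.1, h12.1, ?_⟩
    · rw [Fin.cons_injective_iff]
      exact ⟨by rintro ⟨i, hi⟩; exact (h13 i).2.1 hi, h5⟩
    · intro i j
      refine Fin.cases ?_ (fun i => ?_) i <;> refine Fin.cases ?_ (fun j => ?_) j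
      · simp
      · simpa using fun h => (h13 j).2.2 (G.symm.symm _ _ h)
      · simpa using (h13 i).2.2
      · simpa using h6 i j
    · exact (hc _ _ _).2 ⟨h7, h10.2⟩
    · exact (hc _ _ _).2 ⟨h8, h11.2⟩
    · exact (hc _ _ _).2 ⟨h9, h12.2⟩
    · intro i
      refine Fin.cases ?_ (fun i => ?_) i
      · simpa using hv
      · simpa using (h13 i).1
  · rintro ⟨a, b, c, w, h1, h2, h3, h4, h5, h6, h7, h8, h9, h10, h11, h12, h13⟩
    refine ⟨w 0, h13 0, a, b, c, fun i => w i.succ, h1, h2, h3, h4,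
      h5.comp (Fin.succ_injective _), fun i j => h6 _ _, fun i => h7 _, fun i => h8 _,
      fun i => h9 _, (hs _ _).2 ⟨h10, h7 0⟩, (hs _ _).2 ⟨h11, h8 0⟩, (hs _ _).2 ⟨h12, h9 0⟩,
      fun i => (hs _ _).2 ⟨h13 _, ?_, h6 _ _⟩⟩
    intro h
    exact (Fin.succ_ne_zero i) (h5 h)

theorem defGood (k n : ℕ) : DefN n (k + 3) (fun _ G xs => Good (k + 1) G xs) := by
  induction k generalizing n with
  | zero => exact defCore.congr fun V G xs => core_iff G xs
  | succ k ih =>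
    have h := DefN.ex ((defAway (fun i : Fin n => i.castSucc) (Fin.last n)).and (ih (n + 1)))
    refine h.congr ?_
    intro V G xs
    simp only [Fin.snoc_castSucc, Fin.snoc_last]
    exact good_succ _ G xs

theorem good_iff {V : Type} (k : ℕ) (G : SimpleGraph V) (xs : Fin 0 → V) :
    Good k G xs ↔
      Nonempty ((SimpleGraph.pathGraph 3 ⊕g (⊥ : SimpleGraph (Fin k))) ↪g G) := by
  constructor
  · rintro ⟨a, b, c, w, h1, h2, h3, h4, h5, h6, h7, h8, h9, -⟩
    have hab := h1.ne
    have hbc := h2.ne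
    have h7' := fun i => Ne.symm (h7 i).1
    have h8' := fun i => Ne.symm (h8 i).1
    have h9' := fun i => Ne.symm (h9 i).1
    have h71 := fun i => (h7 i).1
    have h81 := fun i => (h8 i).1
    have h91 := fun i => (h9 i).1
    have h72 := fun i => (h7 i).2
    have h82 := fun i => (h8 i).2
    have h92 := fun i => (h9 i).2
    refine ⟨⟨⟨Sum.elim ![a, b, c] w, ?_⟩, ?_⟩⟩
    · rintro (i | i) (j | j) h
      · fin_cases i <;> fin_cases j <;> simp_all [eq_comm]
      · fin_cases i <;> simp_all [eq_comm]
      · fin_cases j <;> simp_all [eq_comm]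
      · simpa using h5 h
    · intro u v
      change G.Adj (Sum.elim ![a, b, c] w u) (Sum.elim ![a, b, c] w v) ↔ _
      have h1' := h1.symm
      have h2' := h2.symm
      have h4' : ¬ G.Adj c a := fun h => h4 h.symm
      have h72' : ∀ i, ¬ G.Adj (w i) a := fun i h => h72 i h.symm
      have h82' : ∀ i, ¬ G.Adj (w i) b := fun i h => h82 i h.symm
      have h92' : ∀ i, ¬ G.Adj (w i) c := fun i h => h92 i h.symm
      rcases u with i | i <;> rcases v with j | j
      · fin_cases i <;> fin_cases j <;> simp_all [SimpleGraph.pathGraph_adj]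
      · fin_cases i <;> simp_all
      · fin_cases j <;> simp_all
      · simpa using h6 i j
  · rintro ⟨f⟩
    have aw : ∀ u : Fin 3, Away G (fun i => f (.inr i)) (f (.inl u)) := by
      intro u i
      rw [f.map_adj_iff, f.injective.ne_iff]
      simp
    refine ⟨f (.inl 0), f (.inl 1), f (.inl 2), fun i => f (.inr i), ?_, ?_, ?_, ?_, ?_, ?_,
      aw 0, aw 1, aw 2, fun i => i.elim0, fun i => i.elim0, fun i => i.elim0,
      fun _ i => i.elim0⟩
    · rw [f.map_adj_iff]; simp [SimpleGraph.pathGraph_adj]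
    · rw [f.map_adj_iff]; simp [SimpleGraph.pathGraph_adj]
    · rw [f.injective.ne_iff]; simp
    · rw [f.map_adj_iff]; simp [SimpleGraph.pathGraph_adj]
    · exact f.injective.comp Sum.inr_injective
    · intro i j
      rw [f.map_adj_iff]; simp

theorem upper (m : ℕ) (hm : 0 < m) :
    ∃ φ : Language.graph.Sentence, φ.qdepth ≤ m + 2 ∧
        Expresses φ (SimpleGraph.pathGraph 3 ⊕g (⊥ : SimpleGraph (Fin m))) := by
  obtain ⟨k, rfl⟩ : ∃ k, m = k + 1 := ⟨m - 1, by omega⟩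
  obtain ⟨φ, h1, h2⟩ := defGood k 0
  refine ⟨φ, by omega, ?_⟩
  intro V _ G
  rw [← good_iff (k + 1) G default]
  exact h2 V G default

/-- The extension property for sets of at most `m` vertices. -/
def EC {V : Type} (m : ℕ) (G : SimpleGraph V) : Prop :=
  ∀ A : Finset V, A.card ≤ m → ∀ S : Set V, ∃ v, v ∉ A ∧ ∀ a ∈ A, G.Adj v a ↔ a ∈ S

/-- Partial isomorphism between tuples. -/
def PIso {V W ι : Type} (G : SimpleGraph V) (H : SimpleGraph W) (xs : ι → V) (ys : ι → W) :
    Prop :=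
  ∀ a b, (xs a = xs b ↔ ys a = ys b) ∧ (G.Adj (xs a) (xs b) ↔ H.Adj (ys a) (ys b))

theorem PIso.symm {V W ι : Type} {G : SimpleGraph V} {H : SimpleGraph W} {xs : ι → V}
    {ys : ι → W} (h : PIso G H xs ys) : PIso H G ys xs :=
  fun a b => ⟨(h a b).1.symm, (h a b).2.symm⟩

theorem PIso.extend {V W : Type} {G : SimpleGraph V} {H : SimpleGraph W} {n m : ℕ}
    {xs : Fin n → V} {ys : Fin n → W} (h : PIso G H xs ys) (hH : EC m H) (hn : n ≤ m) (x : V) :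
    ∃ y, PIso G H (Fin.snoc xs x : Fin (n + 1) → V) (Fin.snoc ys y : Fin (n + 1) → W) := by
  classical
  have key : ∀ y, (∀ a, (x = xs a ↔ y = ys a) ∧ (G.Adj x (xs a) ↔ H.Adj y (ys a))) →
      PIso G H (Fin.snoc xs x : Fin (n + 1) → V) (Fin.snoc ys y : Fin (n + 1) → W) := by
    intro y hy a b
    refine Fin.lastCases ?_ (fun a => ?_) a <;> refine Fin.lastCases ?_ (fun b => ?_) b
    · simp
    · simpa using hy b
    · simpa [eq_comm, SimpleGraph.adj_comm] using hy a
    · simpa using h a b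
  by_cases hx : ∃ a, x = xs a
  · obtain ⟨a, rfl⟩ := hx
    exact ⟨ys a, key _ fun b => h a b⟩
  · push Not at hx
    obtain ⟨y, hy, hy'⟩ := hH (Finset.univ.image ys)
      ((Finset.card_image_le).trans (by simpa using hn)) {v | ∃ a, ys a = v ∧ G.Adj x (xs a)}
    refine ⟨y, key _ fun a => ⟨⟨fun h => (hx a h).elim, fun h => ?_⟩, ?_⟩⟩
    · exact (hy (by simp [h])).elim
    · rw [hy' (ys a) (by simp)]
      constructor
      · intro h'
        exact ⟨a, rfl, h'⟩
      · rintro ⟨b, hb, h'⟩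
        rwa [(h b a).1.2 hb] at h'

theorem term_eq_var {n : ℕ} (t : Language.graph.Term (Empty ⊕ Fin n)) :
    ∃ i, t = .var (.inr i) := by
  cases t with
  | var v => rcases v with v | i
             · exact v.elim
             · exact ⟨i, rfl⟩
  | func f _ => exact isEmptyElim f

theorem game {V W : Type} {G : SimpleGraph V} {H : SimpleGraph W} {m : ℕ} (hG : EC m G)
    (hH : EC m H) {n : ℕ} (φ : Language.graph.BoundedFormula Empty n) (xs : Fin n → V)
    (ys : Fin n → W) (h : PIso G H xs ys) (hn : n + φ.qdepth ≤ m + 1) :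
    (letI := G.structure; φ.Realize default xs) ↔ (letI := H.structure; φ.Realize default ys) := by
  induction φ with
  | falsum => exact Iff.rfl
  | equal t₁ t₂ =>
    obtain ⟨i, rfl⟩ := term_eq_var t₁
    obtain ⟨j, rfl⟩ := term_eq_var t₂
    exact (h i j).1
  | rel R ts =>
    cases R
    obtain ⟨i, hi⟩ := term_eq_var (ts 0)
    obtain ⟨j, hj⟩ := term_eq_var (ts 1)
    change G.Adj (@Term.realize _ _ G.structure _ _ (ts 0))
      (@Term.realize _ _ G.structure _ _ (ts 1)) ↔
      H.Adj (@Term.realize _ _ H.structure _ _ (ts 0)) (@Term.realize _ _ H.structure _ _ (ts 1))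
    rw [hi, hj]
    exact (h i j).2
  | imp f g ihf ihg =>
    simp only [BoundedFormula.qdepth] at hn
    exact imp_congr (ihf xs ys h (by omega)) (ihg xs ys h (by omega))
  | all f ih =>
    simp only [BoundedFormula.qdepth] at hn
    constructor
    · intro hx y
      obtain ⟨x, hxy⟩ := h.symm.extend hG (by omega) y
      exact (ih _ _ hxy.symm (by omega)).1 (hx x)
    · intro hy x
      obtain ⟨y, hxy⟩ := h.extend hH (by omega) x
      exact (ih _ _ hxy (by omega)).2 (hy y)

theorem EC.mono {V : Type} {G : SimpleGraph V} {m m' : ℕ} (h : EC m G) (hm : m' ≤ m) : EC m' G :=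
  fun A hA => h A (hA.trans hm)

theorem EC.embed {V : Type} {G : SimpleGraph V} {m n : ℕ} (h : EC m G)
    (F : SimpleGraph (Fin n)) (hn : n ≤ m + 1) : Nonempty (F ↪g G) := by
  induction n with
  | zero => exact ⟨⟨⟨fun i => i.elim0, fun i => i.elim0⟩, fun {i} => i.elim0⟩⟩
  | succ n ih =>
    obtain ⟨f⟩ := ih (F.comap Fin.castSucc) (by omega)
    have hf : PIso F G (fun i : Fin n => i.castSucc) f := by
      intro a b
      refine ⟨?_, ?_⟩
      · rw [f.injective.eq_iff]; simp
      · rw [f.map_adj_iff]; rfl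
    obtain ⟨y, hy⟩ := hf.extend h (by omega) (Fin.last n)
    have hid : (Fin.snoc (fun i : Fin n => i.castSucc) (Fin.last n) : Fin (n + 1) → Fin (n + 1))
        = id := by
      funext i
      refine Fin.lastCases ?_ (fun i => ?_) i <;> simp
    rw [hid] at hy
    exact ⟨⟨⟨_, fun a b hab => (hy a b).1.2 hab⟩, fun {a b} => (hy a b).2.symm⟩⟩

/-- Rows that miss the target `t` somewhere on the range of `w`. -/
theorem card_badRow {V : Type} [Fintype V] [DecidableEq V] {m : ℕ} (w : Fin m → V)
    (t : V → Bool) :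
    ((Finset.univ.filter fun r : V → Bool => ∃ k, r (w k) ≠ t (w k)).card : ℝ) ≤
      (1 - (1 / 2) ^ m) * Fintype.card (V → Bool) := by
  set good := Finset.univ.filter fun r : V → Bool => ¬ ∃ k, r (w k) ≠ t (w k) with hgood
  have h1 := Finset.card_filter_add_card_filter_not (s := Finset.univ)
    (fun r : V → Bool => ∃ k, r (w k) ≠ t (w k))
  rw [← hgood, Finset.card_univ] at h1
  have h2 : Fintype.card (V → Bool) ≤ 2 ^ m * good.card := by
    have : ((Finset.univ : Finset (Fin m → Bool)) ×ˢ good).card = 2 ^ m * good.card := by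
      simp
    rw [← this, ← Finset.card_univ]
    refine Finset.card_le_card_of_injOn
      (fun r => (r ∘ w, fun v => if v ∈ Set.range w then t v else r v)) ?_ ?_
    · intro r _
      simp [hgood]
    · intro r _ r' _ hrr
      simp only [Prod.mk.injEq] at hrr
      funext v
      by_cases hv : v ∈ Set.range w
      · obtain ⟨k, rfl⟩ := hv
        exact congrFun hrr.1 k
      · have := congrFun hrr.2 v
        simpa [hv] using this
  have h1' : ((Finset.univ.filter fun r : V → Bool => ∃ k, r (w k) ≠ t (w k)).card : ℝ)
      + good.card = Fintype.card (V → Bool) := by exact_mod_cast h1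
  have h2' : (Fintype.card (V → Bool) : ℝ) ≤ 2 ^ m * good.card := by exact_mod_cast h2
  have h3 : (1 / 2 : ℝ) ^ m * Fintype.card (V → Bool) ≤ good.card := by
    have h4 : (1 / 2 : ℝ) ^ m * 2 ^ m = 1 := by rw [← mul_pow]; norm_num
    calc (1 / 2 : ℝ) ^ m * Fintype.card (V → Bool) ≤ (1 / 2 : ℝ) ^ m * (2 ^ m * good.card) := by
          gcongr
      _ = good.card := by rw [← mul_assoc, h4, one_mul]
  linarith

/-- The target adjacency determined by `w` and `p`. -/
noncomputable def target {V : Type} {m : ℕ} (w : Fin m → V) (p : Fin m → Bool) (v : V) : Bool :=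
  open Classical in decide (∃ k, w k = v ∧ p k = true)

/-- The colouring `c` fails to have a vertex in part `i` with prescribed adjacency. -/
def Bad {I X : Type} {m : ℕ} (i : I) (w : Fin m → I × X) (p : Fin m → Bool)
    (c : I → X → I × X → Bool) : Prop :=
  ∀ x, ∃ k, c i x (w k) ≠ xor (target w p (w k)) (c (w k).1 (w k).2 (i, x))

open Classical in
theorem card_bad {I X : Type} [Fintype I] [Fintype X] {m : ℕ} (i : I) (w : Fin m → I × X)
    (p : Fin m → Bool) (hw : ∀ k, (w k).1 ≠ i) :
    ((Finset.univ.filter (Bad i w p)).card : ℝ) ≤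
      (1 - (1 / 2) ^ m) ^ Fintype.card X * Fintype.card (I → X → I × X → Bool) := by
  let e := Equiv.piSplitAt i (fun _ : I => X → I × X → Bool)
  let t : ({j // j ≠ i} → X → I × X → Bool) → X → I × X → Bool := fun o x v =>
    if h : v.1 ≠ i then xor (target w p v) (o ⟨v.1, h⟩ v.2 (i, x)) else false
  let B : ({j // j ≠ i} → X → I × X → Bool) → Finset (X → I × X → Bool) := fun o =>
    Fintype.piFinset fun x => Finset.univ.filter fun r : I × X → Bool =>
      ∃ k, r (w k) ≠ t o x (w k)
  have h1 : (Finset.univ.filter (Bad i w p)).card ≤ (Finset.univ.sigma B).card := by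
    refine Finset.card_le_card_of_injOn (fun c => ⟨(e c).2, (e c).1⟩) ?_ ?_
    · intro c hc
      have hc' : Bad i w p c := by simpa using hc
      simp only [Finset.coe_sigma, Set.mem_sigma_iff, Finset.coe_univ, Set.mem_univ, true_and, B,
        Finset.mem_coe, Fintype.mem_piFinset, Finset.mem_filter, Finset.mem_univ]
      intro x
      obtain ⟨k, hk⟩ := hc' x
      refine ⟨k, ?_⟩
      simp only [t, dif_pos (hw k)]
      exact hk
    · intro c _ c' _ h
      simp only [Sigma.mk.injEq, heq_eq_eq] at h
      exact e.injective (Prod.ext h.2 h.1)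
  have hq : (0 : ℝ) ≤ 1 - (1 / 2) ^ m := by
    have : (1 / 2 : ℝ) ^ m ≤ 1 := pow_le_one₀ (by norm_num) (by norm_num)
    linarith
  have h2 : ∀ o, ((B o).card : ℝ) ≤
      ((1 - (1 / 2) ^ m) * Fintype.card (I × X → Bool)) ^ Fintype.card X := by
    intro o
    simp only [B, Fintype.card_piFinset, Nat.cast_prod]
    refine (Finset.prod_le_prod (fun _ _ => Nat.cast_nonneg _)
      (fun x _ => card_badRow w (t o x))).trans ?_
    rw [Finset.prod_const, Finset.card_univ]
  have h3 : Fintype.card (I → X → I × X → Bool) =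
      Fintype.card (I × X → Bool) ^ Fintype.card X *
        Fintype.card ({j // j ≠ i} → X → I × X → Bool) := by
    rw [Fintype.card_congr e, Fintype.card_prod]
    congr 1
    simp only [Fintype.card_pi, Finset.prod_const, Finset.card_univ]
  calc ((Finset.univ.filter (Bad i w p)).card : ℝ) ≤ ((Finset.univ.sigma B).card : ℝ) := by
        exact_mod_cast h1
    _ = ∑ o, ((B o).card : ℝ) := by rw [Finset.card_sigma]; push_cast; rfl
    _ ≤ ∑ _o : ({j // j ≠ i} → X → I × X → Bool),
        ((1 - (1 / 2) ^ m) * Fintype.card (I × X → Bool) : ℝ) ^ Fintype.card X :=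
        Finset.sum_le_sum fun o _ => h2 o
    _ = _ := by
        rw [h3, Finset.sum_const, Finset.card_univ, nsmul_eq_mul, mul_pow]
        push_cast
        ring

theorem exists_size (m : ℕ) : ∃ N : ℕ, 0 < N ∧
    ((m + 1 : ℝ) * ((m + 1) * N) ^ m * 2 ^ m) * (1 - (1 / 2) ^ m) ^ N < 1 := by
  have hq : (0 : ℝ) ≤ 1 - (1 / 2) ^ m := by
    have : (1 / 2 : ℝ) ^ m ≤ 1 := pow_le_one₀ (by norm_num) (by norm_num)
    linarith
  have hq1 : (1 - (1 / 2) ^ m : ℝ) < 1 := by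
    have : (0 : ℝ) < (1 / 2) ^ m := by positivity
    linarith
  have h := (tendsto_pow_const_mul_const_pow_of_lt_one m hq hq1).const_mul
    ((m + 1 : ℝ) * (m + 1) ^ m * 2 ^ m)
  rw [mul_zero] at h
  have h' := (h.eventually_lt_const one_pos).and (Filter.eventually_gt_atTop 0)
  obtain ⟨N, hN, hN0⟩ := h'.exists
  refine ⟨N, hN0, lt_of_eq_of_lt ?_ hN⟩
  rw [mul_pow]
  ring

open Classical in
theorem exists_coloring_aux (m : ℕ) (I X : Type) [Fintype I] [Fintype X]
    (hlt : (Fintype.card (I × (Fin m → I × X) × (Fin m → Bool)) : ℝ) *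
      (1 - (1 / 2) ^ m) ^ Fintype.card X < 1) :
    ∃ c : I → X → I × X → Bool,
      ∀ i w (p : Fin m → Bool), (∀ k, (w k).1 ≠ i) → ¬ Bad i w p c := by
  by_contra hcon
  push Not at hcon
  let D : I × (Fin m → I × X) × (Fin m → Bool) → Finset (I → X → I × X → Bool) := fun τ =>
    if ∀ k, (τ.2.1 k).1 ≠ τ.1 then Finset.univ.filter (Bad τ.1 τ.2.1 τ.2.2) else ∅
  have hq : (0 : ℝ) ≤ 1 - (1 / 2) ^ m := by
    have : (1 / 2 : ℝ) ^ m ≤ 1 := pow_le_one₀ (by norm_num) (by norm_num)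
    linarith
  have hD : ∀ τ, ((D τ).card : ℝ) ≤
      (1 - (1 / 2) ^ m) ^ Fintype.card X * Fintype.card (I → X → I × X → Bool) := by
    intro τ
    by_cases h : ∀ k, (τ.2.1 k).1 ≠ τ.1
    · simp only [D]
      rw [if_pos h]
      exact card_bad τ.1 τ.2.1 τ.2.2 h
    · simp only [D]
      rw [if_neg h, Finset.card_empty, Nat.cast_zero]
      exact mul_nonneg (pow_nonneg hq _) (Nat.cast_nonneg _)
  have hU : (Finset.univ : Finset (I → X → I × X → Bool)) ⊆ Finset.univ.biUnion D := by
    intro c _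
    obtain ⟨i, w, p, h1, h2⟩ := hcon c
    rw [Finset.mem_biUnion]
    refine ⟨(i, w, p), Finset.mem_univ _, ?_⟩
    simp only [D]
    rw [if_pos h1]
    exact Finset.mem_filter.2 ⟨Finset.mem_univ _, h2⟩
  have h1 : (Fintype.card (I → X → I × X → Bool) : ℝ) ≤ ∑ τ, ((D τ).card : ℝ) := by
    have := (Finset.card_le_card hU).trans Finset.card_biUnion_le
    rw [Finset.card_univ] at this
    exact_mod_cast this
  have h2 : ∑ τ, ((D τ).card : ℝ) ≤ Fintype.card (I × (Fin m → I × X) × (Fin m → Bool)) *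
      ((1 - (1 / 2) ^ m) ^ Fintype.card X * Fintype.card (I → X → I × X → Bool)) := by
    refine (Finset.sum_le_sum fun τ _ => hD τ).trans ?_
    rw [Finset.sum_const, Finset.card_univ, nsmul_eq_mul]
  have h4 : (0 : ℝ) < Fintype.card (I → X → I × X → Bool) := by
    exact_mod_cast Fintype.card_pos
  rw [← mul_assoc] at h2
  have h5 := mul_lt_mul_of_pos_right hlt h4
  linarith

theorem exists_coloring (m : ℕ) : ∃ N : ℕ, 0 < N ∧
    ∃ c : Fin (m + 1) → Fin N → Fin (m + 1) × Fin N → Bool,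
      ∀ i w (p : Fin m → Bool), (∀ k, (w k).1 ≠ i) → ¬ Bad i w p c := by
  obtain ⟨N, hN0, hN⟩ := exists_size m
  refine ⟨N, hN0, exists_coloring_aux m _ _ (lt_of_eq_of_lt ?_ hN)⟩
  simp only [Fintype.card_prod, Fintype.card_pi, Finset.prod_const, Finset.card_univ,
    Fintype.card_fin, Fintype.card_bool]
  push_cast
  ring

theorem exists_graph (m : ℕ) : ∃ (N : ℕ) (G : SimpleGraph (Fin (m + 1) × Fin N)),
    EC m G ∧ ∀ u v, u.1 = v.1 → u ≠ v → G.Adj u v := by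
  classical
  obtain ⟨N, hN, c, hc⟩ := exists_coloring m
  let G : SimpleGraph (Fin (m + 1) × Fin N) :=
    { Adj := fun u v => u ≠ v ∧ (u.1 = v.1 ∨ xor (c u.1 u.2 v) (c v.1 v.2 u) = true)
      symm := ⟨by
        rintro u v ⟨h1, h2⟩
        refine ⟨h1.symm, h2.imp Eq.symm ?_⟩
        intro h
        rwa [Bool.xor_comm]⟩
      loopless := ⟨fun u h => h.1 rfl⟩ }
  refine ⟨N, G, ?_, fun u v h1 h2 => ⟨h2, Or.inl h1⟩⟩
  intro A hA S
  rcases A.eq_empty_or_nonempty with rfl | ⟨a₀, ha₀⟩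
  · exact ⟨(0, ⟨0, hN⟩), by simp, by simp⟩
  obtain ⟨i, hi⟩ : ∃ i, i ∉ A.image Prod.fst := by
    by_contra h
    push Not at h
    have h1 : (Finset.univ : Finset (Fin (m + 1))) ⊆ A.image Prod.fst := fun i _ => h i
    have h2 := (Finset.card_le_card h1).trans Finset.card_image_le
    simp at h2
    omega
  have hi' : ∀ a ∈ A, a.1 ≠ i := by
    intro a ha h
    exact hi (Finset.mem_image.2 ⟨a, ha, h⟩)
  obtain ⟨f⟩ : Nonempty (A ↪ Fin m) :=
    Function.Embedding.nonempty_of_card_le (by simpa using hA)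
  have : Nonempty A := ⟨⟨a₀, ha₀⟩⟩
  let g : Fin m → A := Function.invFun f
  have hg : ∀ a : A, ∃ k, g k = a := Function.invFun_surjective f.injective
  let w : Fin m → Fin (m + 1) × Fin N := fun k => (g k).1
  let p : Fin m → Bool := fun k => decide (w k ∈ S)
  have hw : ∀ k, (w k).1 ≠ i := fun k => hi' _ (g k).2
  have hb := hc i w p hw
  simp only [Bad] at hb
  push Not at hb
  obtain ⟨x, hx⟩ := hb
  refine ⟨(i, x), fun h => hi' _ h rfl, ?_⟩
  intro a ha
  obtain ⟨k, hk⟩ := hg ⟨a, ha⟩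
  have hwk : w k = a := by simp only [w, hk]
  have hxk := hx k
  rw [hwk] at hxk
  have ht : target w p a = true ↔ a ∈ S := by
    simp only [target, decide_eq_true_eq, p]
    constructor
    · rintro ⟨k', h1, h2⟩
      rwa [← h1]
    · intro h
      exact ⟨k, hwk, by rwa [hwk]⟩
  have hne : (i, x) ≠ a := by
    rintro rfl
    exact hi' _ ha rfl
  change ((i, x) ≠ a ∧ (i = a.1 ∨ xor (c i x a) (c a.1 a.2 (i, x)) = true)) ↔ _
  rw [hxk, ← ht]
  simp [hne, (hi' a ha).symm]

theorem lower (m : ℕ) (φ : Language.graph.Sentence) (hφ : φ.qdepth ≤ m + 1) :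
    ¬ Expresses φ (SimpleGraph.pathGraph 3 ⊕g (⊥ : SimpleGraph (Fin m))) := by
  intro hE
  obtain ⟨N, H, hH, hcl⟩ := exists_graph m
  obtain ⟨M, G, hG, -⟩ := exists_graph (m + 2)
  have hgame : (letI := G.structure; φ.Realize (Fin (m + 2 + 1) × Fin M)) ↔
      (letI := H.structure; φ.Realize (Fin (m + 1) × Fin N)) :=
    game (hG.mono (by omega)) hH φ default default (fun a => a.elim0) (by omega)
  rw [hE _ inferInstance G, hE _ inferInstance H] at hgame
  have hF : Nonempty ((SimpleGraph.pathGraph 3 ⊕g (⊥ : SimpleGraph (Fin m))) ↪g G) := by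
    let e : Fin 3 ⊕ Fin m ≃ Fin (3 + m) := finSumFinEquiv
    obtain ⟨f⟩ := hG.embed
      ((SimpleGraph.pathGraph 3 ⊕g (⊥ : SimpleGraph (Fin m))).comap e.symm) (by omega)
    let e' : (SimpleGraph.pathGraph 3 ⊕g (⊥ : SimpleGraph (Fin m))) ↪g
        ((SimpleGraph.pathGraph 3 ⊕g (⊥ : SimpleGraph (Fin m))).comap e.symm) :=
      ⟨e.toEmbedding, by intro a b; simp⟩
    exact ⟨e'.trans f⟩
  obtain ⟨f⟩ := hgame.1 hF
  -- an independent set of size `m + 2` cannot sit in `m + 1` cliques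
  let s : Fin 2 ⊕ Fin m → Fin 3 ⊕ Fin m := Sum.map ![0, 2] id
  have hs : Function.Injective s := by
    refine Sum.map_injective.2 ⟨?_, Function.injective_id⟩
    decide
  have hind : ∀ a b,
      ¬ (SimpleGraph.pathGraph 3 ⊕g (⊥ : SimpleGraph (Fin m))).Adj (s a) (s b) := by
    rintro (a | a) (b | b)
    · fin_cases a <;> fin_cases b <;> simp [s, SimpleGraph.pathGraph_adj]
    · simp [s]
    · simp [s]
    · simp [s]
  have hinj : Function.Injective fun a => (f (s a)).1 := by
    intro a b hab
    by_contra hne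
    refine hind a b ?_
    rw [← f.map_adj_iff]
    exact hcl _ _ hab fun h => hne (hs (f.injective h))
  have := Fintype.card_le_of_injective _ hinj
  simp at this
  omega

end PathUnion

/-- for `F = P₃ ⊔ mK₁` (with `m ≥ 1`), `D[F] = m + 2 = v(F) − 1`:
some sentence of quantifier depth at most `m + 2` expresses `C[F]`, and no sentence
of quantifier depth at most `m + 1` expresses `C[F]`. -/
theorem depth_path3_union_empty (m : ℕ) (hm : 0 < m) :
    (∃ φ : Language.graph.Sentence, φ.qdepth ≤ m + 2 ∧
        Expresses φ (SimpleGraph.pathGraph 3 ⊕g (⊥ : SimpleGraph (Fin m)))) ∧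
    (∀ φ : Language.graph.Sentence, φ.qdepth ≤ m + 1 →
        ¬Expresses φ (SimpleGraph.pathGraph 3 ⊕g (⊥ : SimpleGraph (Fin m)))) := by
  exact ⟨PathUnion.upper m hm, PathUnion.lower m⟩
end

section
/- For every finite simple graph F on exactly 5 vertices, D[F] ≥ 4; that is, no first-order sentence in the language of graphs of quantifier depth at most 3 expresses the property C[F] of containing an induced subgraph isomorphic to F. -/
open FirstOrder

namespace FiveVertex

/-- Bit `(i, j)` of an `n × n` Boolean matrix packed into a natural number. -/
noncomputable def T (n A i j : ℕ) : Bool :=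
  Nat.beq (Nat.land (Nat.shiftRight A (Nat.add (Nat.mul i n) j)) 1) 1

/-- Kernel-friendly conjunction. -/
noncomputable def andB (a b : Bool) : Bool := Bool.rec (motive := fun _ => Bool) false b a

/-- Kernel-friendly disjunction. -/
noncomputable def orB (a b : Bool) : Bool := Bool.rec (motive := fun _ => Bool) b true a

/-- Kernel-friendly negation. -/
noncomputable def notB (a : Bool) : Bool := Bool.rec (motive := fun _ => Bool) true false a

/-- Kernel-friendly comparison. -/
noncomputable def eqB (a b : Bool) : Bool := Bool.rec (motive := fun _ => Bool) (notB b) b a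

/-- Kernel-friendly bounded existential. -/
noncomputable def anyB (n : ℕ) (f : ℕ → Bool) : Bool :=
  Nat.rec (motive := fun _ => Bool) false (fun k ih => orB (f k) ih) n

/-- Kernel-friendly bounded universal. -/
noncomputable def allB (n : ℕ) (f : ℕ → Bool) : Bool :=
  Nat.rec (motive := fun _ => Bool) true (fun k ih => andB (f k) ih) n

/-- Kernel-friendly universal over Booleans. -/
noncomputable def bothB (f : Bool → Bool) : Bool := andB (f true) (f false)

/-- Kernel-friendly list existential. -/
noncomputable def anyL {α : Type} (l : List α) (f : α → Bool) : Bool :=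
  List.rec (motive := fun _ => Bool) false (fun k _ ih => orB (f k) ih) l

/-- Kernel-friendly list universal. -/
noncomputable def allL {α : Type} (l : List α) (f : α → Bool) : Bool :=
  List.rec (motive := fun _ => Bool) true (fun k _ ih => andB (f k) ih) l

theorem andB_iff (a b : Bool) : andB a b = true ↔ a = true ∧ b = true := by
  cases a <;> cases b <;> simp [andB]

theorem orB_iff (a b : Bool) : orB a b = true ↔ a = true ∨ b = true := by
  cases a <;> cases b <;> simp [orB]

theorem notB_iff (a : Bool) : notB a = true ↔ ¬ a = true := by
  cases a <;> simp [notB]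

theorem eqB_iff (a b : Bool) : eqB a b = true ↔ a = b := by
  cases a <;> cases b <;> simp [eqB, notB]

theorem natB_iff (a b : ℕ) : Nat.beq a b = true ↔ a = b := Nat.beq_eq ▸ Iff.rfl

theorem anyB_iff (n : ℕ) (f : ℕ → Bool) : anyB n f = true ↔ ∃ k, k < n ∧ f k = true := by
  induction n with
  | zero => simp [anyB]
  | succ n ih =>
    have : anyB (n + 1) f = orB (f n) (anyB n f) := rfl
    rw [this, orB_iff, ih]
    constructor
    · rintro (h | ⟨k, hk, h⟩)
      · exact ⟨n, by omega, h⟩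
      · exact ⟨k, by omega, h⟩
    · rintro ⟨k, hk, h⟩
      rcases Nat.lt_succ_iff_lt_or_eq.1 hk with h' | rfl
      · exact Or.inr ⟨k, h', h⟩
      · exact Or.inl h

theorem allB_iff (n : ℕ) (f : ℕ → Bool) : allB n f = true ↔ ∀ k, k < n → f k = true := by
  induction n with
  | zero => simp [allB]
  | succ n ih =>
    have : allB (n + 1) f = andB (f n) (allB n f) := rfl
    rw [this, andB_iff, ih]
    constructor
    · rintro ⟨h, h'⟩ k hk
      rcases Nat.lt_succ_iff_lt_or_eq.1 hk with h1 | rfl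
      · exact h' k h1
      · exact h
    · exact fun h => ⟨h n (by omega), fun k hk => h k (by omega)⟩

theorem bothB_iff (f : Bool → Bool) : bothB f = true ↔ ∀ b, f b = true := by
  simp [bothB, andB_iff, and_comm]

theorem anyL_iff {α : Type} (l : List α) (f : α → Bool) :
    anyL l f = true ↔ ∃ k, k ∈ l ∧ f k = true := by
  induction l with
  | nil => simp [anyL]
  | cons a l ih =>
    have : anyL (a :: l) f = orB (f a) (anyL l f) := rfl
    rw [this, orB_iff, ih]
    simp

theorem allL_iff {α : Type} (l : List α) (f : α → Bool) :
    allL l f = true ↔ ∀ k, k ∈ l → f k = true := by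
  induction l with
  | nil => simp [allL]
  | cons a l ih =>
    have : allL (a :: l) f = andB (f a) (allL l f) := rfl
    rw [this, andB_iff, ih]
    simp

/-- A packed matrix is symmetric with zero diagonal. -/
noncomputable def okB (n A : ℕ) : Bool :=
  allB n fun i => andB (notB (T n A i i)) (allB n fun j => eqB (T n A i j) (T n A j i))

/-- Boolean check of the 2-extension property. -/
noncomputable def extB (n A : ℕ) : Bool :=
  allB n fun a => allB n fun b => bothB fun s => bothB fun t =>
    orB (andB (Nat.beq a b) (notB (eqB s t)))
      (anyB n fun c => andB (eqB (T n A a c) s) (andB (eqB (T n A b c) t)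
        (andB (notB (Nat.beq c a)) (notB (Nat.beq c b)))))

/-- Search for an induced copy of the graph on five vertices with given edge indicators. -/
noncomputable def embB (n A : ℕ) (b01 b02 b03 b04 b12 b13 b14 b23 b24 b34 : Bool) : Bool :=
  anyB n fun v0 => anyB n fun v1 =>
  andB (eqB (T n A v0 v1) b01) <| andB (notB (Nat.beq v1 v0)) <|
  anyB n fun v2 =>
  andB (eqB (T n A v0 v2) b02) <| andB (eqB (T n A v1 v2) b12) <|
  andB (notB (Nat.beq v2 v0)) <| andB (notB (Nat.beq v2 v1)) <|
  anyB n fun v3 =>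
  andB (eqB (T n A v0 v3) b03) <| andB (eqB (T n A v1 v3) b13) <| andB (eqB (T n A v2 v3) b23) <|
  andB (notB (Nat.beq v3 v0)) <| andB (notB (Nat.beq v3 v1)) <| andB (notB (Nat.beq v3 v2)) <|
  anyB n fun v4 =>
  andB (eqB (T n A v0 v4) b04) <| andB (eqB (T n A v1 v4) b14) <| andB (eqB (T n A v2 v4) b24) <|
  andB (eqB (T n A v3 v4) b34) <|
  andB (notB (Nat.beq v4 v0)) <| andB (notB (Nat.beq v4 v1)) <| andB (notB (Nat.beq v4 v2)) <|
  notB (Nat.beq v4 v3)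

/-- The graph of a packed matrix. -/
def gr (n A : ℕ) (h : okB n A = true) : SimpleGraph (Fin n) where
  Adj i j := T n A i j = true
  symm := ⟨by
    intro i j hij
    simp only [okB, allB_iff, andB_iff, notB_iff, eqB_iff] at h
    rw [← (h i i.2).2 j j.2]; exact hij⟩
  loopless := ⟨by
    intro i hi
    simp only [okB, allB_iff, andB_iff, notB_iff, eqB_iff] at h
    exact (h i i.2).1 hi⟩

/-- The 2-extension property. -/
def Ext {V : Type} (G : SimpleGraph V) : Prop :=
  Nonempty V ∧ ∀ (a b : V) (s t : Prop), (a = b → (s ↔ t)) →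
    ∃ c, c ≠ a ∧ c ≠ b ∧ (G.Adj a c ↔ s) ∧ (G.Adj b c ↔ t)

theorem ext_gr (n A : ℕ) (h : okB n A = true) (hn : 0 < n) (he : extB n A = true) :
    Ext (gr n A h) := by
  classical
  refine ⟨⟨⟨0, hn⟩⟩, fun a b s t hst => ?_⟩
  simp only [extB, allB_iff, bothB_iff, orB_iff, andB_iff, notB_iff, eqB_iff, natB_iff,
    anyB_iff] at he
  rcases he a a.2 b b.2 (decide s) (decide t) with h1 | ⟨c, hc, h4, h5, h2, h3⟩
  · exact absurd (by simpa using hst (Fin.ext h1.1)) h1.2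
  · refine ⟨⟨c, hc⟩, fun e => h2 (congrArg Fin.val e), fun e => h3 (congrArg Fin.val e), ?_, ?_⟩
    · show T n A a c = true ↔ s
      rw [h4]; simp
    · show T n A b c = true ↔ t
      rw [h5]; simp

theorem emb_gr (n A : ℕ) (h : okB n A = true) (F : SimpleGraph (Fin 5)) [DecidableRel F.Adj] :
    embB n A (F.Adj 0 1) (F.Adj 0 2) (F.Adj 0 3) (F.Adj 0 4) (F.Adj 1 2) (F.Adj 1 3) (F.Adj 1 4)
      (F.Adj 2 3) (F.Adj 2 4) (F.Adj 3 4) = true ↔ Nonempty (F ↪g gr n A h) := by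
  simp only [embB, anyB_iff, andB_iff, notB_iff, eqB_iff, natB_iff]
  constructor
  · rintro ⟨v0, h0, v1, h1, a01, n01, v2, h2, a02, a12, n02, n12, v3, h3,
      a03, a13, a23, n03, n13, n23, v4, h4, a04, a14, a24, a34, n04, n14, n24, n34⟩
    let f : Fin 5 → Fin n := ![⟨v0, h0⟩, ⟨v1, h1⟩, ⟨v2, h2⟩, ⟨v3, h3⟩, ⟨v4, h4⟩]
    have key : ∀ i j : Fin 5, i < j → f i ≠ f j ∧ ((gr n A h).Adj (f i) (f j) ↔ F.Adj i j) := by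
      intro i j hij
      fin_cases i <;> fin_cases j <;> first
        | (exfalso; revert hij; decide)
        | (refine ⟨fun e => ?_, ?_⟩
           · have e' := congrArg Fin.val e
             simp [f] at e'
             omega
           · show T n A _ _ = true ↔ _
             simp [f, *])
    refine ⟨⟨⟨f, ?_⟩, ?_⟩⟩
    · intro i j hij
      rcases lt_trichotomy i j with hl | hl | hl
      · exact absurd hij (key i j hl).1
      · exact hl
      · exact absurd hij.symm (key j i hl).1
    · intro i j
      show (gr n A h).Adj (f i) (f j) ↔ F.Adj i j
      rcases lt_trichotomy i j with hl | hl | hl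
      · exact (key i j hl).2
      · subst hl; simp
      · rw [SimpleGraph.adj_comm, F.adj_comm]; exact (key j i hl).2
  · rintro ⟨f⟩
    have hne : ∀ i j : Fin 5, i ≠ j → (f i : ℕ) ≠ f j := fun i j hij e =>
      hij (f.injective (Fin.ext e))
    have ha : ∀ i j : Fin 5, T n A (f i) (f j) = decide (F.Adj i j) := by
      intro i j
      have : T n A (f i) (f j) = true ↔ F.Adj i j := f.map_rel_iff
      rw [Bool.eq_iff_iff, this]; simp
    refine ⟨f 0, (f 0).2, f 1, (f 1).2, ha _ _, hne _ _ (by decide), f 2, (f 2).2, ha _ _, ha _ _,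
      hne _ _ (by decide), hne _ _ (by decide), f 3, (f 3).2, ha _ _, ha _ _, ha _ _,
      hne _ _ (by decide), hne _ _ (by decide), hne _ _ (by decide), f 4, (f 4).2, ha _ _, ha _ _,
      ha _ _, ha _ _, hne _ _ (by decide), hne _ _ (by decide), hne _ _ (by decide),
      hne _ _ (by decide)⟩

/-- Partial isomorphism between tuples. -/
def PI {V W : Type} (G : SimpleGraph V) (H : SimpleGraph W) {n : ℕ} (x : Fin n → V)
    (y : Fin n → W) : Prop :=
  ∀ i j, (x i = x j ↔ y i = y j) ∧ (G.Adj (x i) (x j) ↔ H.Adj (y i) (y j))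

theorem PI.symm {V W : Type} {G : SimpleGraph V} {H : SimpleGraph W} {n : ℕ} {x : Fin n → V}
    {y : Fin n → W} (h : PI G H x y) : PI H G y x :=
  fun i j => ⟨(h i j).1.symm, (h i j).2.symm⟩

theorem PI.snoc {V W : Type} {G : SimpleGraph V} {H : SimpleGraph W} {n : ℕ} {x : Fin n → V}
    {y : Fin n → W} (h : PI G H x y) {a : V} {b : W} 
    (hab : ∀ i, (x i = a ↔ y i = b) ∧ (G.Adj (x i) a ↔ H.Adj (y i) b)) :
    PI G H (Fin.snoc (α := fun _ => V) x a) (Fin.snoc (α := fun _ => W) y b) := by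
  intro i j
  induction i using Fin.lastCases with
  | last =>
    induction j using Fin.lastCases with
    | last => simp
    | cast j =>
      simp only [Fin.snoc_last, Fin.snoc_castSucc]
      rw [eq_comm, @eq_comm _ b, G.adj_comm, H.adj_comm]
      exact hab j
  | cast i =>
    induction j using Fin.lastCases with
    | last => simpa using hab i
    | cast j => simpa using h i j

theorem PI.extend {V W : Type} {G : SimpleGraph V} {H : SimpleGraph W} (hH : Ext H)
    {n : ℕ} (hn : n ≤ 2) {x : Fin n → V} {y : Fin n → W} (h : PI G H x y) (a : V) :
    ∃ b : W, PI G H (Fin.snoc (α := fun _ => V) x a) (Fin.snoc (α := fun _ => W) y b) := by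
  by_cases hx : ∃ i, x i = a
  · obtain ⟨i, rfl⟩ := hx
    exact ⟨y i, h.snoc fun j => h j i⟩
  · push Not at hx
    suffices hs : ∃ b, ∀ i, y i ≠ b ∧ (G.Adj (x i) a ↔ H.Adj (y i) b) by
      obtain ⟨b, hb⟩ := hs
      exact ⟨b, h.snoc fun i => ⟨by simp [hx i, (hb i).1], (hb i).2⟩⟩
    obtain ⟨⟨w⟩, hE⟩ := hH
    interval_cases n
    · exact ⟨w, fun i => i.elim0⟩
    · obtain ⟨c, h1, -, h2, -⟩ := hE (y 0) (y 0) (G.Adj (x 0) a) (G.Adj (x 0) a) (fun _ => Iff.rfl)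
      refine ⟨c, fun i => ?_⟩
      obtain rfl : i = 0 := Subsingleton.elim _ _
      exact ⟨h1.symm, h2.symm⟩
    · obtain ⟨c, h1, h2, h3, h4⟩ := hE (y 0) (y 1) (G.Adj (x 0) a) (G.Adj (x 1) a)
        (fun e => by rw [(h 0 1).1.2 e])
      refine ⟨c, fun i => ?_⟩
      fin_cases i
      · exact ⟨h1.symm, h3.symm⟩
      · exact ⟨h2.symm, h4.symm⟩

theorem term_var {n : ℕ} (t : Language.graph.Term (Empty ⊕ Fin n)) :
    ∃ i, t = Language.Term.var (Sum.inr i) := by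
  cases t with
  | var v => 
    rcases v with v | v
    · exact v.elim
    · exact ⟨v, rfl⟩
  | func f _ => exact isEmptyElim f

theorem realize_iff {V W : Type} {G : SimpleGraph V} {H : SimpleGraph W} (hG : Ext G) (hH : Ext H)
    {n : ℕ} (φ : Language.graph.BoundedFormula Empty n) (hφ : n + φ.qdepth ≤ 3)
    (x : Fin n → V) (y : Fin n → W) (hxy : PI G H x y) (u : Empty → V) (v : Empty → W) :
    (letI := G.structure; φ.Realize u x) ↔ (letI := H.structure; φ.Realize v y) := by
  let := G.structure
  let := H.structure
  induction φ with
  | falsum => exact Iff.rfl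
  | equal t₁ t₂ =>
    obtain ⟨i, rfl⟩ := term_var t₁
    obtain ⟨j, rfl⟩ := term_var t₂
    exact (hxy i j).1
  | rel R ts =>
    cases R
    obtain ⟨i, hi⟩ := term_var (ts 0)
    obtain ⟨j, hj⟩ := term_var (ts 1)
    have key := (hxy i j).2
    show G.Adj _ _ ↔ H.Adj _ _
    beta_reduce
    rw [hi, hj]
    exact key
  | imp f g ihf ihg =>
    simp only [Language.BoundedFormula.qdepth] at hφ
    simp only [Language.BoundedFormula.realize_imp]
    exact imp_congr (ihf (by omega) x y hxy) (ihg (by omega) x y hxy)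
  | all f ih =>
    simp only [Language.BoundedFormula.qdepth] at hφ
    simp only [Language.BoundedFormula.realize_all]
    constructor
    · intro hf b
      obtain ⟨a, ha⟩ := hxy.symm.extend hG (by omega) b
      exact (ih (by omega) _ _ ha.symm).1 (hf a)
    · intro hf a
      obtain ⟨b, hb⟩ := hxy.extend hH (by omega) a
      exact (ih (by omega) _ _ hb).2 (hf b)

/-- There are graphs with the 2-extension property with and without induced copies of `F`. -/
def Sep {V : Type} (F : SimpleGraph V) : Prop :=
  (∃ (n : ℕ) (G : SimpleGraph (Fin n)), Ext G ∧ Nonempty (F ↪g G)) ∧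
  (∃ (n : ℕ) (G : SimpleGraph (Fin n)), Ext G ∧ ¬ Nonempty (F ↪g G))

theorem Sep.of_iso {V W : Type} {F : SimpleGraph V} {F' : SimpleGraph W} (e : F ≃g F')
    (h : Sep F') : Sep F := by
  obtain ⟨⟨n, G, hG, ⟨f⟩⟩, ⟨m, H, hH, hf⟩⟩ := h
  exact ⟨⟨n, G, hG, ⟨e.toEmbedding.trans f⟩⟩,
    ⟨m, H, hH, fun ⟨f⟩ => hf ⟨e.symm.toEmbedding.trans f⟩⟩⟩

theorem Sep.not_expresses {V : Type} {F : SimpleGraph V} (h : Sep F)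
    (φ : Language.graph.Sentence) (hφ : φ.qdepth ≤ 3) : ¬ Expresses φ F := by
  intro he
  obtain ⟨⟨n, G, hG, hf⟩, ⟨m, H, hH, hf'⟩⟩ := h
  have h1 := (he _ inferInstance G).2 hf
  refine hf' ((he _ inferInstance H).1 ?_)
  exact (realize_iff hG hH φ (by omega) _ _ (fun i => i.elim0) _ _).1 h1

/-- A graph with 19 vertices, with the 2-extension property and containing all graphs on
five vertices. -/
def big : ℕ := 978161111618010505687412863221477526095377509469051148569239299472242947037167802226230107716670457584974206

/-- The Paley graph on 9 vertices. -/
def pal : ℕ := 1079824147505409476602446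

/-- A graph on 12 vertices without induced `C₄ + K₁`. -/
def h12 : ℕ := 9149785456957590552602187342349199592555940

/-- The complement of the former. -/
def h12c : ℕ := 1999225846666252905411335588488920339929690

/-- The lexicographic product of two 5-cycles. -/
def lex : ℕ := 43374984399442310449068256491188403457993737943783554129469844284914774600085148354960504726582634218508002687256721131371689945170722323413768704621563443838897856844075592756910661567474

/-- `embB` for the five-vertex graph packed as `r`. -/
noncomputable def embR (n A r : ℕ) : Bool :=
  embB n A (T 5 r 0 1) (T 5 r 0 2) (T 5 r 0 3) (T 5 r 0 4) (T 5 r 1 2) (T 5 r 1 3) (T 5 r 1 4)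
    (T 5 r 2 3) (T 5 r 2 4) (T 5 r 3 4)

theorem embR_iff (n A r : ℕ) (h : okB n A = true) (hr : okB 5 r = true) :
    embR n A r = true ↔ Nonempty (gr 5 r hr ↪g gr n A h) := by
  have : DecidableRel (gr 5 r hr).Adj := Classical.decRel _
  rw [← emb_gr]
  have : ∀ i j : Fin 5, decide ((gr 5 r hr).Adj i j) = T 5 r i j := by
    intro i j
    rw [Bool.eq_iff_iff, decide_eq_true_iff]; rfl
  simp only [this]
  rfl

/-- Representatives of the isomorphism classes of graphs on five vertices, together with a
degree sequence invariant (which serves only to make the search faster). -/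
def reps : List (ℕ × ℕ) := [
  (5, 0), (19, 34), (82, 1062), (537, 33838), (4128, 1082430), (194, 3238), (33, 34952), (145,
  34986), (649, 36014), (96, 1083544), (600, 1083578), (4240, 1084606), (257, 101772), (1153,
  101806), (208, 1117588), (1104, 1117622), (712, 1150364), (4744, 1150398), (1216, 3248028),
  (8384, 3248062), (2049, 241070), (208, 1255824), (712, 1255858), (1608, 1256886), (5640,
  1289662), (4352, 3319358), (320, 3320472), (1216, 3320506), (5248, 3321534), (2112, 3387292),
  (9280, 3387326), (6144, 7595838), (13312, 7598014), (20480, 16510910)]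

theorem reps_ok : (allL reps fun r => andB (okB 5 r.2) (andB (embR 19 big r.2)
    (orB (notB (embR 9 pal r.2)) (orB (notB (embR 12 h12 r.2)) (orB (notB (embR 12 h12c r.2))
      (notB (embR 25 lex r.2))))))) = true := by
  decide +kernel

/-- `8 ^ degree`. -/
noncomputable def pw (a b c d : Bool) : ℕ :=
  Nat.pow 8 (Nat.add (Nat.add a.toNat b.toNat) (Nat.add c.toNat d.toNat))

/-- The degree sequence invariant. -/
noncomputable def key (b01 b02 b03 b04 b12 b13 b14 b23 b24 b34 : Bool) : ℕ :=
  Nat.add (pw b01 b02 b03 b04) (Nat.add (pw b01 b12 b13 b14) (Nat.add (pw b02 b12 b23 b24)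
    (Nat.add (pw b03 b13 b23 b34) (pw b04 b14 b24 b34))))

theorem reps_all : (bothB fun a => bothB fun b => bothB fun c => bothB fun d => bothB fun e =>
    bothB fun f => bothB fun g => bothB fun h => bothB fun i => bothB fun j =>
      anyL reps fun r => andB (Nat.beq (key a b c d e f g h i j) r.1)
        (embB 5 r.2 a b c d e f g h i j)) = true := by
  decide +kernel

theorem ok_big : okB 19 big = true := by decide +kernel
theorem ok_pal : okB 9 pal = true := by decide +kernel
theorem ok_h12 : okB 12 h12 = true := by decide +kernel
theorem ok_h12c : okB 12 h12c = true := by decide +kernel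
theorem ok_lex : okB 25 lex = true := by decide +kernel
theorem ext_big : extB 19 big = true := by decide +kernel
theorem ext_pal : extB 9 pal = true := by decide +kernel
theorem ext_h12 : extB 12 h12 = true := by decide +kernel
theorem ext_h12c : extB 12 h12c = true := by decide +kernel
theorem ext_lex : extB 25 lex = true := by decide +kernel

theorem okB_of_mem {r : ℕ × ℕ} (hr : r ∈ reps) : okB 5 r.2 = true :=
  ((andB_iff _ _).1 ((allL_iff _ _).1 reps_ok r hr)).1

theorem sep_rep {r : ℕ × ℕ} (hr : r ∈ reps) : Sep (gr 5 r.2 (okB_of_mem hr)) := by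
  have := (allL_iff _ _).1 reps_ok r hr
  simp only [andB_iff, orB_iff] at this
  obtain ⟨h1, h2, h3⟩ := this
  refine ⟨⟨19, gr 19 big ok_big, ext_gr _ _ _ (by norm_num) ext_big, (embR_iff _ _ _ _ _).1 h2⟩, ?_⟩
  have aux : ∀ n A (h : okB n A = true), notB (embR n A r.2) = true →
      ¬ Nonempty (gr 5 r.2 (okB_of_mem hr) ↪g gr n A h) := by
    intro n A h hn
    rw [← embR_iff]
    exact (notB_iff _).1 hn
  rcases h3 with h3 | h3 | h3 | h3
  · exact ⟨9, gr 9 pal ok_pal, ext_gr _ _ _ (by norm_num) ext_pal, aux _ _ _ h3⟩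
  · exact ⟨12, gr 12 h12 ok_h12, ext_gr _ _ _ (by norm_num) ext_h12, aux _ _ _ h3⟩
  · exact ⟨12, gr 12 h12c ok_h12c, ext_gr _ _ _ (by norm_num) ext_h12c, aux _ _ _ h3⟩
  · exact ⟨25, gr 25 lex ok_lex, ext_gr _ _ _ (by norm_num) ext_lex, aux _ _ _ h3⟩

theorem sep_five (F : SimpleGraph (Fin 5)) : Sep F := by
  classical
  have := reps_all
  simp only [bothB_iff] at this
  have := this (F.Adj 0 1) (F.Adj 0 2) (F.Adj 0 3) (F.Adj 0 4) (F.Adj 1 2) (F.Adj 1 3) (F.Adj 1 4)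
    (F.Adj 2 3) (F.Adj 2 4) (F.Adj 3 4)
  obtain ⟨r, hr, h'⟩ := (anyL_iff _ _).1 this
  have h := ((andB_iff _ _).1 h').2
  obtain ⟨f⟩ := (emb_gr 5 r.2 (okB_of_mem hr) F).1 h
  exact Sep.of_iso (RelIso.ofSurjective f (Finite.surjective_of_injective f.injective)) (sep_rep hr)

end FiveVertex

/-- for every graph `F` on exactly 5 vertices, `D[F] ≥ 4`: no first-order
sentence of quantifier depth at most 3 expresses the property of containing an induced
subgraph isomorphic to `F`. -/
theorem no_depth_three_sentence_for_five_vertices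
    (V : Type) [Fintype V] (hV : Fintype.card V = 5) (F : SimpleGraph V)
    (φ : Language.graph.Sentence) (hφ : φ.qdepth ≤ 3) :
    ¬Expresses φ F := by
  have e : Fin 5 ≃ V := (Fintype.equivFinOfCardEq hV).symm
  exact (FiveVertex.Sep.of_iso (SimpleGraph.Iso.comap e F).symm
    (FiveVertex.sep_five _)).not_expresses φ hφ
end
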